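/- The thickness of the complete bipartite graph K_{n,n} equals ⌈(n+2)/4⌉. -/

import Mathlib

open SimpleGraph

/-- A simple graph is planar if it admits a drawing in the plane: an injective
placement of vertices and, for each edge, an injective continuous arc joining
the images of its endpoints, such that arcs avoid vertex images in their
interiors and distinct arcs meet only at vertex images. -/
def IsPlanar {V : Type*} (G : SimpleGraph V) : Prop :=
  ∃ (f : V → ℝ × ℝ) (γ : G.edgeSet → (Set.Icc (0:ℝ) 1 → ℝ × ℝ)),
    Function.Injective f ∧
    (∀ e : G.edgeSet, Continuous (γ e)) ∧
    (∀ e : G.edgeSet, ∃ u v : V, (e : Sym2 V) = s(u, v) ∧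
      γ e ⟨0, by norm_num⟩ = f u ∧ γ e ⟨1, by norm_num⟩ = f v) ∧
    (∀ e : G.edgeSet, Function.Injective (γ e)) ∧
    (∀ e : G.edgeSet, ∀ t : Set.Icc (0:ℝ) 1, (t : ℝ) ≠ 0 → (t : ℝ) ≠ 1 →
      ∀ v : V, γ e t ≠ f v) ∧
    (∀ e e' : G.edgeSet, e ≠ e' → ∀ s t : Set.Icc (0:ℝ) 1,
      γ e s = γ e' t → γ e s ∈ Set.range f)

/-- The thickness of a graph: the least `n` such that `G` is the union of `n`
planar subgraphs. -/
noncomputable def thickness {V : Type*} (G : SimpleGraph V) : ℕ :=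
  sInf {n : ℕ | ∃ H : Fin n → SimpleGraph V,
    (∀ i, H i ≤ G) ∧ (∀ i, IsPlanar (H i)) ∧ (⨆ i, H i) = G}

/-!
Lower bound: a planar bipartite graph with `V ≥ 3` vertices has at most `2 V - 4` edges, so `k`
planar layers give `n ^ 2 ≤ k (4 n - 4)`. The edge bound is Euler's inequality, obtained without the
Jordan curve theorem. The faces of a drawing are replaced by the functionals that send a cycle over
`ZMod 2` to its winding number modulo two around a point off the drawing. Continuous logarithms show
that a nonzero cycle winds differently on the two sides of each of its edges, hence there are more
of these functionals than the dimension of the cycle space. Crossing the edge `e` changes the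
functional by a multiple of the coordinate at `e`, so `e` borders at most two faces, and a face
bordered by a forest would not separate any two points, so each face has at least as many edges as
the girth.

Upper bound: the vertices of either side of `K_{4m+2,4m+2}` form `m` blocks of size four and two
further vertices. Layer `r` draws the edges inside block `r` as a cube, that is `K_{4,4}` minus a
perfect matching, and joins each vertex outside the block to two corners of the side face in which
it is placed. One more layer collects the missing matchings and the remaining edges at the further
vertices. All layers are book embeddings with two pages.
-/

open Complex
open scoped Real Topology

/-- The function `h` has a continuous logarithm on the set `K`. -/
def HasLogOn {X : Type*} [TopologicalSpace X] (h : X → ℂ) (K : Set X) : Prop :=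
  ∃ g : X → ℂ, ContinuousOn g K ∧ ∀ x ∈ K, exp (g x) = h x

namespace HasLogOn

variable {X : Type*} [TopologicalSpace X] {h h₁ h₂ : X → ℂ} {K A : Set X}

theorem mono (hlog : HasLogOn h K) (hA : A ⊆ K) : HasLogOn h A :=
  let ⟨g, hg, hexp⟩ := hlog
  ⟨g, hg.mono hA, fun x hx => hexp x (hA hx)⟩

theorem congr (hlog : HasLogOn h₁ K) (heq : Set.EqOn h₁ h₂ K) : HasLogOn h₂ K :=
  let ⟨g, hg, hexp⟩ := hlog
  ⟨g, hg, fun x hx => (hexp x hx).trans (heq hx)⟩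

theorem mul (hlog₁ : HasLogOn h₁ K) (hlog₂ : HasLogOn h₂ K) :
    HasLogOn (fun x => h₁ x * h₂ x) K :=
  let ⟨g₁, hg₁, hexp₁⟩ := hlog₁
  let ⟨g₂, hg₂, hexp₂⟩ := hlog₂
  ⟨fun x => g₁ x + g₂ x, hg₁.add hg₂, fun x hx => by rw [exp_add, hexp₁ x hx, hexp₂ x hx]⟩

theorem of_mapsTo_slitPlane (hh : ContinuousOn h K) (hK : Set.MapsTo h K slitPlane) :
    HasLogOn h K :=
  ⟨fun x => log (h x), hh.clog hK, fun _ hx => exp_log (slitPlane_ne_zero (hK hx))⟩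

theorem const {c : ℂ} (hc : c ≠ 0) : HasLogOn (fun _ : X => c) K :=
  ⟨fun _ => log c, continuousOn_const, fun _ _ => exp_log hc⟩

theorem of_subsingleton (hK : K.Subsingleton) (hne : ∀ x ∈ K, h x ≠ 0) : HasLogOn h K :=
  ⟨fun x => log (h x), hK.continuousOn _, fun x hx => exp_log (hne x hx)⟩

theorem of_continuous [SimplyConnectedSpace X] [LocallyPathConnectedSpace X]
    (hh : Continuous h) (hne : ∀ x, h x ≠ 0) : HasLogOn h Set.univ := by
  obtain ⟨g, hg, hexp⟩ := exists_continuousOn_eqOn_exp_comp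
    (U := Set.univ) ((Homeomorph.Set.univ X).toHomotopyEquiv.simplyConnectedSpace) isOpen_univ
    hh.continuousOn (by simpa using hne)
  exact ⟨g, hg, hexp⟩

/-- The two logarithms differ by a constant at the common point. -/
theorem union (hlog₁ : HasLogOn h K) (hlog₂ : HasLogOn h A) (hK : IsClosed K) (hA : IsClosed A)
    (hKA : (K ∩ A).Subsingleton) : HasLogOn h (K ∪ A) := by
  classical
  obtain ⟨g₁, hg₁, hexp₁⟩ := hlog₁
  obtain ⟨g₂, hg₂, hexp₂⟩ := hlog₂
  obtain ⟨c, hc, hagree⟩ : ∃ c, exp c = 1 ∧ ∀ x ∈ K ∩ A, g₁ x = g₂ x + c := by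
    rcases hKA.eq_empty_or_singleton with hempty | ⟨y, hy⟩
    · exact ⟨0, exp_zero, by simp [hempty]⟩
    · obtain ⟨hyK, hyA⟩ : y ∈ K ∩ A := by simp [hy]
      refine ⟨g₁ y - g₂ y, ?_, by simp [hy]⟩
      rw [exp_sub, hexp₁ y hyK, ← hexp₂ y hyA, div_self (exp_ne_zero _)]
  have hg : ∀ x ∈ A, K.piecewise g₁ (fun x => g₂ x + c) x = g₂ x + c := by
    intro x hxA
    by_cases hxK : x ∈ K
    · rw [Set.piecewise_eq_of_mem _ _ _ hxK, hagree x ⟨hxK, hxA⟩]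
    · rw [Set.piecewise_eq_of_notMem _ _ _ hxK]
  refine ⟨K.piecewise g₁ (fun x => g₂ x + c), ?_, ?_⟩
  · exact (hg₁.congr (Set.piecewise_eqOn _ _ _)).union_of_isClosed
      ((hg₂.add continuousOn_const).congr hg) hK hA
  · rintro x (hxK | hxA)
    · rw [Set.piecewise_eq_of_mem _ _ _ hxK, hexp₁ x hxK]
    · rw [hg x hxA, exp_add, hexp₂ x hxA, hc, mul_one]

theorem union_finite [T1Space X] {F : Set X} (hlog : HasLogOn h K) (hK : IsClosed K)
    (hF : F.Finite) (hne : ∀ x ∈ F, h x ≠ 0) : HasLogOn h (K ∪ F) := by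
  induction F, hF using Set.Finite.induction_on with
  | empty => simpa using hlog
  | @insert x F _ hF ih =>
    rw [← Set.union_singleton, ← Set.union_assoc]
    exact (ih fun y hy => hne y (.inr hy)).union
      (of_subsingleton Set.subsingleton_singleton (by simpa using hne x (.inl rfl)))
      (hK.union hF.isClosed) isClosed_singleton
      (Set.subsingleton_singleton.anti Set.inter_subset_right)

theorem of_comp_injective {Y : Type*} [TopologicalSpace Y] [CompactSpace Y] [T2Space X]
    {f : Y → X} (hf : Continuous f) (hinj : Function.Injective f)
    (hlog : HasLogOn (fun y => h (f y)) Set.univ) : HasLogOn h (Set.range f) := by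
  obtain ⟨g, hg, hexp⟩ := hlog
  have hemb := hf.isClosedEmbedding hinj
  refine ⟨Function.extend f g 0, ?_, ?_⟩
  · rw [continuousOn_iff_continuous_domRestrict,
      ← hemb.isEmbedding.toHomeomorph.comp_continuous_iff']
    refine (continuousOn_univ.1 hg).congr fun y => ?_
    exact (hinj.extend_apply g 0 y).symm
  · rintro _ ⟨y, rfl⟩
    rw [hinj.extend_apply, hexp y trivial]

end HasLogOn

theorem sub_const_of_exp_eq {X : Type*} [TopologicalSpace X] [PreconnectedSpace X] {g₁ g₂ : X → ℂ}
    (hg₁ : Continuous g₁) (hg₂ : Continuous g₂) (hexp : ∀ x, exp (g₁ x) = exp (g₂ x)) (x y : X) :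
    g₁ x - g₁ y = g₂ x - g₂ y := by
  have hconst : g₁ x - g₂ x = g₁ y - g₂ y := isCoveringMap_exp.const_of_comp (hg₁.sub hg₂)
    (fun x y => Subtype.ext <| by simp [exp_sub, hexp]) x y
  linear_combination hconst

theorem div_mem_slitPlane {u v : ℂ} (huv : ‖u - v‖ < ‖v‖) : u / v ∈ slitPlane := by
  have hv : v ≠ 0 := norm_pos_iff.1 ((norm_nonneg _).trans_lt huv)
  have hdiv : u / v = 1 + (u - v) / v := by field_simp; ring
  rw [hdiv]
  apply mem_slitPlane_of_norm_lt_one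
  rwa [norm_div, div_lt_one (norm_pos_iff.2 hv)]

theorem hasLogOn_sub_div_sub {K : Set ℂ} {p q : ℂ} (hK : ∀ z ∈ K, ‖q - p‖ < ‖z - q‖) :
    HasLogOn (fun z => (z - p) / (z - q)) K := by
  refine .of_mapsTo_slitPlane ?_ fun z hz => div_mem_slitPlane (by simpa using hK z hz)
  refine ContinuousOn.div (by fun_prop) (by fun_prop) fun z hz => ?_
  exact norm_pos_iff.1 ((norm_nonneg _).trans_lt (hK z hz))

-- A square root of `(z - c) * exp g`, divided by `exp (g / 2)`, is a multiple of `exp (θ / 2)`,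
-- which changes sign after one turn around the circle.
theorem not_forall_sq_eq_sub_mul_of_hasLogOn_sphere {c : ℂ} {r : ℝ} {s h : ℂ → ℂ} (hr : 0 < r)
    (hs : ContinuousOn s (Metric.sphere c r)) (hh : HasLogOn h (Metric.sphere c r)) :
    ¬ ∀ z ∈ Metric.sphere c r, s z ^ 2 = (z - c) * h z := by
  intro hsq
  obtain ⟨g, hg, hexp⟩ := hh
  have hmem : ∀ θ, circleMap c r θ ∈ Metric.sphere c r := circleMap_mem_sphere c hr.le
  let φ : ℝ → ℂ := fun θ => s (circleMap c r θ) / exp (g (circleMap c r θ) / 2) / exp (θ * I / 2)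
  have hcirc := continuous_circleMap c r
  have hφ : Continuous φ :=
    ((hs.comp_continuous hcirc hmem).div
      ((hg.comp_continuous hcirc hmem).div_const 2).cexp fun _ => exp_ne_zero _).div
      (by fun_prop) fun _ => exp_ne_zero _
  have hφsq : ∀ θ, φ θ ^ 2 = r := by
    intro θ
    have hhalf (w : ℂ) : exp (w / 2) ^ 2 = exp w := by rw [← exp_nat_mul]; congr 1; push_cast; ring
    simp only [φ, div_pow, hhalf, hsq _ (hmem θ), ← hexp _ (hmem θ), circleMap_sub_center,
      circleMap_zero]
    field_simp [exp_ne_zero]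
  have hφ0 : φ 0 ≠ 0 := fun h0 => by simpa [h0, hr.ne'] using (hφsq 0).symm
  have hconst : φ (2 * π) = φ 0 :=
    isPreconnected_univ.eq_of_sq_eq hφ.continuousOn (continuousOn_const (c := φ 0))
      (fun θ _ => by simp [hφsq]) (fun _ => hφ0) (Set.mem_univ 0) rfl (Set.mem_univ _)
  have hneg : φ (2 * π) = -φ 0 := by
    have hπ : exp (((2 * π : ℝ) : ℂ) * I / 2) = -1 := by
      rw [← exp_pi_mul_I]; congr 1; push_cast; ring
    have hper : circleMap c r (2 * π) = circleMap c r 0 := by simpa using periodic_circleMap c r 0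
    simp only [φ, hπ, hper, div_neg, div_one, ofReal_zero, zero_mul, zero_div,
      exp_zero]
  exact hφ0 (self_eq_neg.1 (hconst.symm.trans hneg))

theorem not_hasLogOn_sub_sphere {p : ℂ} {R : ℝ} (hp : ‖p‖ < R) :
    ¬ HasLogOn (fun z => z - p) (Metric.sphere 0 R) := by
  rintro ⟨g, hg, hexp⟩
  have hne : ∀ z ∈ Metric.sphere (0 : ℂ) R, ‖p‖ < ‖z‖ := fun z hz => by
    rwa [mem_sphere_zero_iff_norm.1 hz]
  refine not_forall_sq_eq_sub_mul_of_hasLogOn_sphere ((norm_nonneg p).trans_lt hp)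
    (hg.div_const 2).cexp
    (hasLogOn_sub_div_sub (p := p) (q := 0) (by simpa using hne)) fun z hz => ?_
  have : z ≠ 0 := norm_pos_iff.1 ((norm_nonneg p).trans_lt (hne z hz))
  rw [← exp_nat_mul, Nat.cast_ofNat, mul_div_cancel₀ _ two_ne_zero, hexp z hz]
  field_simp

theorem not_exists_sq_eq_sub_div_sub {a b : ℂ} (hab : a ≠ b) :
    ¬ ∃ s : ℂ → ℂ, ContinuousOn s {a, b}ᶜ ∧
      ∀ p ∈ ({a, b}ᶜ : Set ℂ), s p ^ 2 = (b - p) / (a - p) := by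
  rintro ⟨s, hs, hsq⟩
  have hr : 0 < ‖b - a‖ / 2 := by simpa [sub_eq_zero] using hab.symm
  have hmem : ∀ z ∈ Metric.sphere a (‖b - a‖ / 2), z ∉ ({a, b} : Set ℂ) := by
    rintro z hz (rfl | rfl)
    · simp [hr.ne] at hz
    · rw [mem_sphere_iff_norm] at hz; linarith
  refine not_forall_sq_eq_sub_mul_of_hasLogOn_sphere (s := fun z => s z * (a - z)) hr
    ((hs.mono hmem).mul (by fun_prop))
    ((HasLogOn.of_mapsTo_slitPlane (h := fun z => (z - b) / (a - b)) (by fun_prop)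
      fun z hz => ?_).mul (.const (sub_ne_zero.2 hab))) fun z hz => ?_
  · refine div_mem_slitPlane ?_
    rw [sub_sub_sub_cancel_right, mem_sphere_iff_norm.1 hz, norm_sub_rev a b]
    linarith
  · have : a - z ≠ 0 := sub_ne_zero.2 fun h => hmem z hz (.inl h.symm)
    have : a - b ≠ 0 := sub_ne_zero.2 hab
    rw [mul_pow, hsq z (hmem z hz)]
    field_simp
    ring

theorem subset_or_disjoint_of_disjoint_frontier {X : Type*} [TopologicalSpace X]
    {S F : Set X} (hS : IsPreconnected S) (hSF : Disjoint (frontier F) S) :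
    S ⊆ F ∨ Disjoint S F := by
  have hcover : S ⊆ interior F ∪ (closure F)ᶜ := fun x hx => by
    by_contra! hx'
    exact Set.disjoint_left.1 hSF ⟨by simpa using fun h => hx' (.inr h), fun h => hx' (.inl h)⟩ hx
  rcases hS.subset_or_subset isOpen_interior isClosed_closure.isOpen_compl
    (Set.disjoint_compl_right_iff_subset.2 interior_subset_closure) hcover with h | h
  · exact .inl (h.trans interior_subset)
  · exact .inr ((Set.disjoint_compl_right_iff_subset.2 subset_closure).symm.mono_left h)

-- Otherwise a logarithm of `(z - p) / (z - q)`, extended to the plane, would turn the function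
-- equal to `z - q` on `F` and to `z - p` off `F` into a nonvanishing continuous one.
theorem not_hasLogOn_of_frontier_subset {K F : Set ℂ} {p q : ℂ} (hK : IsCompact K)
    (hF : frontier F ⊆ K) (hp : p ∈ F) (hq : q ∉ F) (hqK : q ∉ K) :
    ¬ HasLogOn (fun z => (z - p) / (z - q)) K := by
  classical
  rintro ⟨g, hg, hexp⟩
  obtain ⟨G, hG⟩ := ContinuousMap.exists_restrict_eq hK.isClosed ⟨K.domRestrict g, hg.domRestrict⟩
  let h : ℂ → ℂ := fun z => if z ∈ F then exp (G z) * (z - q) else z - p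
  have hcont : Continuous h := by
    refine Continuous.if (fun z hz => ?_) (by fun_prop) (by fun_prop)
    have hGz : G z = g z := DFunLike.congr_fun hG ⟨z, hF hz⟩
    have hzq : z - q ≠ 0 := sub_ne_zero.2 (ne_of_mem_of_not_mem (hF hz) hqK)
    rw [hGz, hexp z (hF hz), div_mul_cancel₀ _ hzq]
  have hne : ∀ z, h z ≠ 0 := by
    intro z
    by_cases hz : z ∈ F
    · simpa [h, hz, sub_eq_zero] using ne_of_mem_of_not_mem hz hq
    · simpa [h, hz, sub_eq_zero] using (ne_of_mem_of_not_mem hp hz).symm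
  have hlog := HasLogOn.of_continuous hcont hne
  obtain ⟨R, hR⟩ := (hK.isBounded.union ((Set.finite_singleton p).insert q).isBounded).subset_ball 0
  have hnorm : ∀ {z}, z ∈ K ∪ {q, p} → ‖z‖ < R := fun hz => by simpa using hR hz
  have hdisj : Disjoint (frontier F) (Metric.sphere 0 R) :=
    Set.disjoint_left.2 fun z hz hzR => (hnorm (.inl (hF hz))).ne (by simpa using hzR)
  rcases subset_or_disjoint_of_disjoint_frontier
    (isPreconnected_sphere (by simp [rank_real_complex]) 0 R) hdisj with hSF | hSF
  · refine not_hasLogOn_sub_sphere (p := q) (hnorm (by simp)) ?_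
    have hinv : HasLogOn (fun z => exp (-G z)) (Metric.sphere 0 R) :=
      ⟨fun z => -G z, by fun_prop, fun _ _ => rfl⟩
    refine (hinv.mul (hlog.mono (Set.subset_univ _))).congr fun z hz => ?_
    simp [h, hSF hz, ← mul_assoc, ← exp_add]
  · refine not_hasLogOn_sub_sphere (p := p) (hnorm (by simp)) ?_
    refine (hlog.mono (Set.subset_univ _)).congr fun z hz => ?_
    simp [h, Set.disjoint_left.1 hSF hz]

/-- The number of full turns by which the principal logarithm fails to follow the segment from
`w` to `w'`; the value at `w = 0` or `w' = 0` is arbitrary. -/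
noncomputable def logJump (w w' : ℂ) : ℤ :=
  Classical.epsilon fun n => log w + log (w' / w) = log w' + n * (2 * π * I)

theorem log_add_log_div {w w' : ℂ} (hw : w ≠ 0) (hw' : w' ≠ 0) :
    log w + log (w' / w) = log w' + logJump w w' * (2 * π * I) := by
  refine Classical.epsilon_spec
    (p := fun n : ℤ => log w + log (w' / w) = log w' + n * (2 * π * I)) ?_
  rw [← exp_eq_exp_iff_exists_int, exp_add, exp_log hw, exp_log (div_ne_zero hw' hw), exp_log hw',
    mul_div_cancel₀ _ hw]

/-- The number of turns which the path `γ` makes around `p`, beyond the difference of the principal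
logarithms at its ends; the value at points of `γ` is arbitrary. -/
noncomputable def turn {a b : ℂ} (γ : Path a b) (p : ℂ) : ℤ :=
  Classical.epsilon fun n => ∃ g : unitInterval → ℂ, Continuous g ∧ (∀ t, exp (g t) = γ t - p) ∧
    g 1 - g 0 = log (b - p) - log (a - p) + n * (2 * π * I)

section Turn

variable {a b p q : ℂ} {γ : Path a b}

theorem exists_log_sub_of_notMem_range (hp : p ∉ Set.range γ) :
    ∃ g : unitInterval → ℂ, Continuous g ∧ ∀ t, exp (g t) = γ t - p := by
  obtain ⟨g, hg, hexp⟩ := HasLogOn.of_continuous (h := fun t : ℝ => γ.extend t - p) (by fun_prop)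
    fun t => sub_ne_zero.2 fun ht => hp (γ.extend_range ▸ ⟨t, ht⟩)
  exact ⟨fun t => g t, (continuousOn_univ.1 hg).comp continuous_subtype_val,
    fun t => (hexp t trivial).trans (by simp)⟩

theorem exists_log_sub_turn (hp : p ∉ Set.range γ) :
    ∃ g : unitInterval → ℂ, Continuous g ∧ (∀ t, exp (g t) = γ t - p) ∧
      g 1 - g 0 = log (b - p) - log (a - p) + turn γ p * (2 * π * I) := by
  refine Classical.epsilon_spec (p := fun n : ℤ => ∃ g : unitInterval → ℂ, Continuous g ∧
    (∀ t, exp (g t) = γ t - p) ∧ g 1 - g 0 = log (b - p) - log (a - p) + n * (2 * π * I)) ?_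
  obtain ⟨g, hg, hexp⟩ := exists_log_sub_of_notMem_range hp
  have hlog (t : unitInterval) : exp (g t) = exp (log (γ t - p)) := by
    rw [hexp, exp_log (by rw [← hexp]; exact exp_ne_zero _)]
  obtain ⟨m, hm⟩ := exp_eq_exp_iff_exists_int.1 (hlog 1)
  obtain ⟨n, hn⟩ := exp_eq_exp_iff_exists_int.1 (hlog 0)
  refine ⟨m - n, g, hg, hexp, ?_⟩
  rw [hm, hn, γ.source, γ.target]
  push_cast
  ring

theorem turn_sub_turn (hpq : ∀ t, ‖q - p‖ < ‖γ t - p‖) :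
    turn γ q - turn γ p = logJump (b - p) (b - q) - logJump (a - p) (a - q) := by
  have hp (t) : γ t - p ≠ 0 := norm_pos_iff.1 ((norm_nonneg _).trans_lt (hpq t))
  have hq (t) : γ t - q ≠ 0 := fun h => by simpa [← sub_eq_zero.1 h] using hpq t
  have hslit (t) : (γ t - q) / (γ t - p) ∈ slitPlane :=
    div_mem_slitPlane (by simpa [norm_sub_rev] using hpq t)
  obtain ⟨g, hg, hgexp, hgturn⟩ := exists_log_sub_turn (γ := γ) (p := p)
    fun ⟨t, ht⟩ => hp t (sub_eq_zero.2 ht)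
  obtain ⟨k, hk, hkexp, hkturn⟩ := exists_log_sub_turn (γ := γ) (p := q)
    fun ⟨t, ht⟩ => hq t (sub_eq_zero.2 ht)
  have hchange : Continuous fun t => g t + log ((γ t - q) / (γ t - p)) :=
    hg.add (Continuous.clog (by fun_prop (disch := exact hp)) hslit)
  have hends := sub_const_of_exp_eq hk hchange (fun t => by
    rw [hkexp, exp_add, hgexp, exp_log (slitPlane_ne_zero (hslit t)), mul_div_cancel₀ _ (hp t)]) 1 0
  have ha := log_add_log_div (γ.source ▸ hp 0) (γ.source ▸ hq 0)
  have hb := log_add_log_div (γ.target ▸ hp 1) (γ.target ▸ hq 1)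
  simp only [γ.source, γ.target] at hends
  have hint : ((turn γ q - turn γ p : ℤ) : ℂ) * (2 * π * I) =
      ((logJump (b - p) (b - q) - logJump (a - p) (a - q) : ℤ) : ℂ) * (2 * π * I) := by
    push_cast
    linear_combination hends - hkturn + hgturn - ha + hb
  exact_mod_cast mul_right_cancel₀ two_pi_I_ne_zero hint

theorem eventually_turn_sub_turn (hp : p ∉ Set.range γ) :
    ∀ᶠ q in 𝓝 p, turn γ q - turn γ p = logJump (b - p) (b - q) - logJump (a - p) (a - q) := by
  have hdist : 0 < Metric.infDist p (Set.range γ) :=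
    ((isCompact_range γ.continuous).isClosed.notMem_iff_infDist_pos (Set.range_nonempty γ)).1 hp
  filter_upwards [Metric.ball_mem_nhds p hdist] with q hq
  refine turn_sub_turn fun t => ?_
  rw [← dist_eq_norm, ← dist_eq_norm, dist_comm (γ t)]
  exact (Metric.mem_ball.1 hq).trans_le (Metric.infDist_le_dist_of_mem ⟨t, rfl⟩)

-- Such an `N` would be the sign of a continuous branch of the square root of `(b - p) / (a - p)`.
theorem not_exists_turn_cochain (hab : a ≠ b) :
    ¬ ∃ N : ℂ → ZMod 2, ∀ p, p ≠ a → p ≠ b → ∀ᶠ q in 𝓝 p,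
      N q - N p = ↑(logJump (b - p) (b - q) - logJump (a - p) (a - q)) := by
  rintro ⟨N, hN⟩
  let s : ℂ → ℂ := fun p => exp ((log (b - p) - log (a - p)) / 2) * ZMod.stdAddChar (N p)
  have hsq {p : ℂ} (ha : a - p ≠ 0) (hb : b - p ≠ 0) : s p ^ 2 = (b - p) / (a - p) := by
    have hsign : ZMod.stdAddChar (N p) ^ 2 = (1 : ℂ) := by
      rw [← AddChar.map_nsmul_eq_pow, CharTwo.two_nsmul, AddChar.map_zero_eq_one]
    rw [mul_pow, hsign, ← exp_nat_mul, Nat.cast_ofNat, mul_div_cancel₀ _ two_ne_zero, exp_sub,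
      exp_log ha, exp_log hb, mul_one]
  have hcont {p : ℂ} (ha : a - p ≠ 0) (hb : b - p ≠ 0) : ContinuousAt s p := by
    have hratio {c : ℂ} (hc : c - p ≠ 0) : ContinuousAt (fun q => log ((c - q) / (c - p))) p :=
      ContinuousAt.clog (by fun_prop) (by simp [div_self hc])
    have hne {c : ℂ} (hc : c - p ≠ 0) : ∀ᶠ q in 𝓝 p, c - q ≠ 0 :=
      (by fun_prop : ContinuousAt (fun q => c - q) p).eventually_ne hc
    refine ContinuousAt.congr (f := fun q =>
      s p * exp ((log ((b - q) / (b - p)) - log ((a - q) / (a - p))) / 2))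
      (continuousAt_const.mul (((hratio hb).sub (hratio ha)).div_const 2).cexp) ?_
    filter_upwards [hN p (sub_ne_zero.1 ha).symm (sub_ne_zero.1 hb).symm, hne ha, hne hb]
      with q hq hqa hqb
    have hjump_a := log_add_log_div ha hqa
    have hjump_b := log_add_log_div hb hqb
    simp only [s]
    rw [← sub_add_cancel (N q) (N p), hq, AddChar.map_add_eq_mul, ZMod.stdAddChar_coe,
      mul_right_comm, ← mul_assoc, ← exp_add, ← exp_add]
    congr 2
    push_cast
    linear_combination hjump_b / 2 - hjump_a / 2
  have hne {c p : ℂ} (hp : p ∈ ({a, b}ᶜ : Set ℂ)) (hc : c ∈ ({a, b} : Set ℂ)) : c - p ≠ 0 :=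
    sub_ne_zero.2 fun h => hp (h ▸ hc)
  exact not_exists_sq_eq_sub_div_sub hab ⟨s,
    fun p hp => (hcont (hne hp (by simp)) (hne hp (by simp))).continuousWithinAt,
    fun p hp => hsq (hne hp (by simp)) (hne hp (by simp))⟩

end Turn

theorem connectedComponentIn_subset_of_mem_closure {X : Type*} [TopologicalSpace X]
    [LocallyConnectedSpace X] {U W : Set X} {x y : X} (hW : IsOpen W) (hUW : U ⊆ W) (hyW : y ∈ W)
    (hy : y ∈ closure (connectedComponentIn U x)) :
    connectedComponentIn U x ⊆ connectedComponentIn W y := by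
  obtain ⟨w, hwW, hwU⟩ :=
    mem_closure_iff.1 hy _ hW.connectedComponentIn (mem_connectedComponentIn hyW)
  rw [connectedComponentIn_eq hwW]
  exact isPreconnected_connectedComponentIn.subset_connectedComponentIn hwU
    ((connectedComponentIn_subset U x).trans hUW)

theorem disjoint_frontier_connectedComponentIn {X : Type*} [TopologicalSpace X]
    [LocallyConnectedSpace X] {U : Set X} (hU : IsOpen U) (x : X) :
    Disjoint (frontier (connectedComponentIn U x)) U := by
  refine Set.disjoint_left.2 fun y hy hyU => ?_
  rw [hU.connectedComponentIn.frontier_eq] at hy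
  have hsub := connectedComponentIn_subset_of_mem_closure hU subset_rfl hyU hy.1
  obtain ⟨w, hw⟩ := closure_nonempty_iff.1 ⟨y, hy.1⟩
  apply hy.2
  rw [connectedComponentIn_eq hw, ← connectedComponentIn_eq (hsub hw)]
  exact mem_connectedComponentIn hyU

/-- A drawing in the plane of a multigraph with vertices `V` and edges `E`. Each edge is drawn as an
injective path, which orients it from `src e` to `tgt e`. -/
structure Drawing (V E : Type*) where
  point : V → ℂ
  src : E → V
  tgt : E → V
  arc : ∀ e, Path (point (src e)) (point (tgt e))
  point_injective : Function.Injective point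
  arc_injective : ∀ e, Function.Injective (arc e)
  eq_zero_or_one_of_mem_range_point : ∀ e t, arc e t ∈ Set.range point → t = 0 ∨ t = 1
  inter_subset_range_point : ∀ e e', e ≠ e' →
    Set.range (arc e) ∩ Set.range (arc e') ⊆ Set.range point

namespace Drawing

variable {V E : Type*} (D : Drawing V E) {S T : Set E} {e : E} {v : V} {p q : ℂ}

/-- The vertex `v` is an end of the edge `e`. -/
def Incident (v : V) (e : E) : Prop := v = D.src e ∨ v = D.tgt e

/-- The union of the arcs of the edges in `S`. -/
def arcs (S : Set E) : Set ℂ := ⋃ e ∈ S, Set.range (D.arc e)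

/-- The union of the arcs of the edges in `S` and of all the vertices. -/
def carrier (S : Set E) : Set ℂ := D.arcs S ∪ Set.range D.point

theorem arcs_mono (h : S ⊆ T) : D.arcs S ⊆ D.arcs T := Set.biUnion_subset_biUnion_left h

theorem carrier_mono (h : S ⊆ T) : D.carrier S ⊆ D.carrier T :=
  Set.union_subset_union_left _ (D.arcs_mono h)

theorem arc_mem_arcs (he : e ∈ S) (t : unitInterval) : D.arc e t ∈ D.arcs S :=
  Set.mem_biUnion he ⟨t, rfl⟩

theorem isClosed_arcs [Finite E] (S : Set E) : IsClosed (D.arcs S) :=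
  S.toFinite.isClosed_biUnion fun e _ => (isCompact_range (D.arc e).continuous).isClosed

theorem isCompact_carrier [Finite V] [Finite E] (S : Set E) : IsCompact (D.carrier S) :=
  (S.toFinite.isCompact_biUnion fun e _ => isCompact_range (D.arc e).continuous).union
    (Set.finite_range D.point).isCompact

theorem point_mem_range_arc_iff : D.point v ∈ Set.range (D.arc e) ↔ D.Incident v e := by
  constructor
  · rintro ⟨t, ht⟩
    rcases D.eq_zero_or_one_of_mem_range_point e t ⟨v, ht.symm⟩ with rfl | rfl
    · exact .inl (D.point_injective (ht.symm.trans (D.arc e).source))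
    · exact .inr (D.point_injective (ht.symm.trans (D.arc e).target))
  · rintro (rfl | rfl)
    · exact ⟨0, (D.arc e).source⟩
    · exact ⟨1, (D.arc e).target⟩

theorem src_ne_tgt (e : E) : D.src e ≠ D.tgt e := fun h =>
  zero_ne_one (α := unitInterval) <| D.arc_injective e <| by
    rw [(D.arc e).source, (D.arc e).target, h]

theorem arc_mem_carrier_imp {t : unitInterval} (ht : D.arc e t ∈ D.carrier {e}ᶜ) :
    t = 0 ∨ t = 1 := by
  refine D.eq_zero_or_one_of_mem_range_point e t (ht.elim (fun harc => ?_) id)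
  obtain ⟨e', he', hmem⟩ := Set.mem_iUnion₂.1 harc
  exact D.inter_subset_range_point e e' (Ne.symm he') ⟨⟨t, rfl⟩, hmem⟩

section Leaf

/-- Some vertex is an end of exactly one edge of `T`. -/
def HasLeaf (T : Set E) : Prop := ∃ v, ∃! e, e ∈ T ∧ D.Incident v e

theorem subsingleton_arcs_inter_range_arc (hv : D.Incident v e)
    (hleaf : ∀ e' ∈ T, D.Incident v e' → e' = e) :
    (D.arcs (T \ {e}) ∩ Set.range (D.arc e)).Subsingleton := by
  have hend : ∀ x ∈ D.arcs (T \ {e}) ∩ Set.range (D.arc e),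
      ∃ w, D.Incident w e ∧ w ≠ v ∧ D.point w = x := by
    rintro x ⟨hx, hxe⟩
    obtain ⟨e', ⟨heT, hne⟩, hxe'⟩ := Set.mem_iUnion₂.1 hx
    obtain ⟨w, rfl⟩ := D.inter_subset_range_point e e' (Ne.symm hne) ⟨hxe, hxe'⟩
    refine ⟨w, D.point_mem_range_arc_iff.1 hxe, ?_, rfl⟩
    rintro rfl
    exact hne (hleaf e' heT (D.point_mem_range_arc_iff.1 hxe'))
  intro x hx y hy
  obtain ⟨u, hu, huv, rfl⟩ := hend x hx
  obtain ⟨w, hw, hwv, rfl⟩ := hend y hy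
  have huw : u = w := by
    unfold Incident at hu hw hv
    grind
  rw [huw]

theorem hasLogOn_arc (hp : p ∉ Set.range (D.arc e)) (hq : q ∉ Set.range (D.arc e)) :
    HasLogOn (fun z => (z - p) / (z - q)) (Set.range (D.arc e)) := by
  refine .of_comp_injective (D.arc e).continuous (D.arc_injective e) ?_
  obtain ⟨g, hg, hgexp⟩ := exists_log_sub_of_notMem_range hp
  obtain ⟨k, hk, hkexp⟩ := exists_log_sub_of_notMem_range hq
  exact ⟨fun t => g t - k t, (hg.sub hk).continuousOn, fun t _ => by
    rw [exp_sub, hgexp, hkexp]⟩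

theorem hasLogOn_arcs_of_hasLeaf [Finite E] (S : Set E)
    (hS : ∀ T ⊆ S, T.Nonempty → D.HasLeaf T) (hp : p ∉ D.arcs S) (hq : q ∉ D.arcs S) :
    HasLogOn (fun z => (z - p) / (z - q)) (D.arcs S) := by
  induction S using WellFoundedLT.induction with | ind S ih
  rcases S.eq_empty_or_nonempty with rfl | hne
  · exact .of_subsingleton (by simp [arcs]) (by simp [arcs])
  obtain ⟨v, e, ⟨he, hve⟩, hleaf⟩ := hS S subset_rfl hne
  have hdiff : S \ {e} ⊆ S := Set.sdiff_subset
  have hsplit : D.arcs S = D.arcs (S \ {e}) ∪ Set.range (D.arc e) := by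
    rw [arcs, ← Set.sdiff_union_of_subset (Set.singleton_subset_iff.2 he), Set.biUnion_union,
      Set.biUnion_singleton, Set.sdiff_union_of_subset (Set.singleton_subset_iff.2 he), arcs]
  have hrange : Set.range (D.arc e) ⊆ D.arcs S :=
    Set.subset_biUnion_of_mem (u := fun e => Set.range (D.arc e)) he
  rw [hsplit]
  refine (ih _ (Set.sdiff_singleton_ssubset.2 he) (fun T hT => hS T (hT.trans hdiff))
    (fun h => hp (D.arcs_mono hdiff h)) fun h => hq (D.arcs_mono hdiff h)).union
    (D.hasLogOn_arc (fun h => hp (hrange h)) fun h => hq (hrange h)) (D.isClosed_arcs _)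
    (isCompact_range (D.arc e).continuous).isClosed ?_
  exact D.subsingleton_arcs_inter_range_arc hve fun e' he' hv => hleaf e' ⟨he', hv⟩

theorem hasLogOn_carrier_of_hasLeaf [Finite V] [Finite E] {S : Set E}
    (hS : ∀ T ⊆ S, T.Nonempty → D.HasLeaf T) (hp : p ∉ D.carrier S) (hq : q ∉ D.carrier S) :
    HasLogOn (fun z => (z - p) / (z - q)) (D.carrier S) := by
  refine (D.hasLogOn_arcs_of_hasLeaf S hS (fun h => hp (.inl h)) fun h => hq (.inl h)).union_finite
    (D.isClosed_arcs S) (Set.finite_range D.point) fun z hz => div_ne_zero ?_ ?_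
  · exact sub_ne_zero.2 fun h => hp (.inr (h ▸ hz))
  · exact sub_ne_zero.2 fun h => hq (.inr (h ▸ hz))

end Leaf

section Cycles

variable [Fintype E]

open Classical in
/-- The boundary map of the drawn multigraph, with coefficients in `ZMod 2`. -/
noncomputable def boundary : (E → ZMod 2) →ₗ[ZMod 2] (V → ZMod 2) :=
  Fintype.linearCombination (ZMod 2) fun e => Pi.single (D.tgt e) 1 - Pi.single (D.src e) 1

/-- The cycle space of the drawn multigraph over `ZMod 2`. -/
noncomputable def cycles : Submodule (ZMod 2) (E → ZMod 2) := LinearMap.ker D.boundary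

theorem sum_boundary_mul [Fintype V] (y : E → ZMod 2) (m : V → ZMod 2) :
    ∑ v, D.boundary y v * m v = ∑ e, y e * (m (D.tgt e) - m (D.src e)) := by
  classical
  simp only [boundary, Fintype.linearCombination_apply, Finset.sum_apply, Pi.smul_apply,
    Pi.sub_apply, smul_eq_mul, Finset.sum_mul, mul_assoc]
  rw [Finset.sum_comm]
  simp [← Finset.mul_sum, sub_mul, Pi.single_apply]

theorem card_edges_lt_finrank_cycles_add [Fintype V] [Nonempty V] :
    Fintype.card E < Module.finrank (ZMod 2) D.cycles + Fintype.card V := by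
  have hboundary := LinearMap.finrank_range_add_finrank_ker D.boundary
  let total : (V → ZMod 2) →ₗ[ZMod 2] ZMod 2 := ∑ v, LinearMap.proj v
  have htotal (x) : total x = ∑ v, x v := by simp [total]
  have hle : LinearMap.range D.boundary ≤ LinearMap.ker total := by
    rintro _ ⟨y, rfl⟩
    simpa [htotal] using D.sum_boundary_mul y 1
  have hker := LinearMap.finrank_range_add_finrank_ker total
  have hsurj : LinearMap.range total = ⊤ := by
    classical
    refine LinearMap.range_eq_top.2 fun c => ?_
    obtain ⟨v⟩ := ‹Nonempty V›
    exact ⟨Pi.single v c, by simp [htotal]⟩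
  rw [Module.finrank_fintype_fun_eq_card] at hboundary hker
  rw [hsurj, finrank_top, Module.finrank_self] at hker
  have := Submodule.finrank_mono hle
  unfold cycles
  lia

/-- The functional sending a cycle to the parity of its winding number around `p`. -/
noncomputable def winding (p : ℂ) : (E → ZMod 2) →ₗ[ZMod 2] ZMod 2 :=
  Fintype.linearCombination (ZMod 2) fun e => (turn (D.arc e) p : ZMod 2)

theorem eventually_winding_sub [Fintype V] {y : E → ZMod 2}
    (hp : p ∉ D.arcs (Function.support y)) :
    ∀ᶠ q in 𝓝 p, D.winding q y - D.winding p y =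
      ∑ v, D.boundary y v * (logJump (D.point v - p) (D.point v - q) : ZMod 2) := by
  have hedge (e) : ∀ᶠ q in 𝓝 p, y e * ((turn (D.arc e) q : ZMod 2) - turn (D.arc e) p) =
      y e * ((logJump (D.point (D.tgt e) - p) (D.point (D.tgt e) - q) : ZMod 2) -
        logJump (D.point (D.src e) - p) (D.point (D.src e) - q)) := by
    by_cases hy : y e = 0
    · simp [hy]
    · filter_upwards [eventually_turn_sub_turn fun h => hp (Set.mem_biUnion hy h)] with q hq
      rw [← Int.cast_sub, hq, Int.cast_sub]
  filter_upwards [Filter.eventually_all.2 hedge] with q hq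
  rw [D.sum_boundary_mul y fun v => (logJump (D.point v - p) (D.point v - q) : ZMod 2)]
  simp only [winding, Fintype.linearCombination_apply, smul_eq_mul, ← Finset.sum_sub_distrib,
    ← mul_sub, hq]

theorem winding_eq_of_isPreconnected [Finite V] {z : E → ZMod 2} (hz : z ∈ D.cycles) {N : Set ℂ}
    (hN : IsPreconnected N) (hdisj : Disjoint N (D.arcs (Function.support z))) (hp : p ∈ N)
    (hq : q ∈ N) : D.winding p z = D.winding q z := by
  cases nonempty_fintype V
  refine hN.constant (f := fun x => D.winding x z) (fun x hx => ?_) hp hq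
  refine ContinuousAt.continuousWithinAt ?_
  refine continuousAt_const.congr (f := fun _ => D.winding x z) ?_
  filter_upwards [D.eventually_winding_sub (Set.disjoint_left.1 hdisj hx)] with y hy
  rw [LinearMap.mem_ker.1 hz] at hy
  exact (sub_eq_zero.1 (by simpa using hy)).symm

end Cycles

theorem mem_carrier_univ (hp : p ∈ D.carrier Set.univ) :
    p ∈ D.carrier {e}ᶜ ∨ p ∈ Set.range (D.arc e) := by
  rcases hp with hp | hp
  · obtain ⟨e', -, he'⟩ := Set.mem_iUnion₂.1 hp
    by_cases hee : e' = e
    · exact .inr (hee ▸ he')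
    · exact .inl (.inl (Set.mem_biUnion hee he'))
  · exact .inl (.inr hp)

theorem winding_single [Fintype E] [DecidableEq E] (p : ℂ) (e : E) :
    D.winding p (Pi.single e 1) = turn (D.arc e) p := by
  simp [winding, Fintype.linearCombination_apply_single]

section Separation

variable [Finite V] [Fintype E] {z : E → ZMod 2}

theorem eventually_winding_sub_single [DecidableEq E] (hz : z ∈ D.cycles) (he : z e = 1)
    (hp : p ∉ D.carrier {e}ᶜ) :
    ∀ᶠ q in 𝓝 p, D.winding p (z - Pi.single e 1) - D.winding q (z - Pi.single e 1) =
      ↑(logJump (D.point (D.tgt e) - p) (D.point (D.tgt e) - q) -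
        logJump (D.point (D.src e) - p) (D.point (D.src e) - q)) := by
  cases nonempty_fintype V
  have hsupport : Function.support (z - Pi.single e 1) ⊆ {e}ᶜ := by
    rintro e' he' rfl
    simp [he] at he'
  have hp' : p ∉ D.arcs (Function.support (z - Pi.single e 1)) := fun h =>
    hp (.inl (D.arcs_mono hsupport h))
  filter_upwards [D.eventually_winding_sub hp'] with q hq
  let m (v : V) : ZMod 2 := logJump (D.point v - p) (D.point v - q)
  have hz_sum : ∑ e, z e * (m (D.tgt e) - m (D.src e)) = 0 := by
    rw [← D.sum_boundary_mul, LinearMap.mem_ker.1 hz]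
    simp
  have hsingle : ∑ e', (Pi.single e 1 : E → ZMod 2) e' * (m (D.tgt e') - m (D.src e')) =
      m (D.tgt e) - m (D.src e) := by
    simp [Pi.single_apply]
  rw [D.sum_boundary_mul _ m] at hq
  simp only [Pi.sub_apply, sub_mul, Finset.sum_sub_distrib] at hq hz_sum hsingle
  rw [Int.cast_sub]
  linear_combination -hq - hz_sum + hsingle

/-- A nonzero cycle has different winding parities on the two sides of each of its edges: otherwise
the turns of the edge and the windings of the remaining path would glue to a square root of
`(z - b) / (z - a)`, where `a` and `b` are the ends of the edge. -/
theorem eq_zero_of_forall_winding_eq (hz : z ∈ D.cycles) {c : ZMod 2}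
    (hc : ∀ p ∉ D.carrier Set.univ, D.winding p z = c) : z = 0 := by
  classical
  by_contra hne
  obtain ⟨e, he⟩ := Function.ne_iff.1 hne
  replace he : z e = 1 := Fin.eq_one_of_ne_zero (z e) he
  set y := z - Pi.single e 1 with hy
  let N (p : ℂ) : ZMod 2 :=
    if p ∈ Set.range (D.arc e) then c - D.winding p y else turn (D.arc e) p
  have hN (p) (hp : p ∉ D.carrier {e}ᶜ) : N p = c - D.winding p y := by
    by_cases hpe : p ∈ Set.range (D.arc e)
    · exact if_pos hpe
    · have hpc : p ∉ D.carrier Set.univ := fun h => (D.mem_carrier_univ h).elim hp hpe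
      simp only [N, if_neg hpe, hy, map_sub, hc p hpc, D.winding_single, sub_sub_cancel]
  refine not_exists_turn_cochain (D.point_injective.ne (D.src_ne_tgt e)) ⟨N, fun p hpa hpb => ?_⟩
  by_cases hpe : p ∈ Set.range (D.arc e)
  · have hpc : p ∉ D.carrier {e}ᶜ := by
      obtain ⟨t, rfl⟩ := hpe
      intro ht
      rcases D.arc_mem_carrier_imp ht with rfl | rfl
      · exact hpa (D.arc e).source
      · exact hpb (D.arc e).target
    filter_upwards [D.eventually_winding_sub_single hz he hpc,
      (D.isCompact_carrier _).isClosed.isOpen_compl.mem_nhds hpc] with q hq hqc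
    rw [hN p hpc, hN q hqc, ← hq, sub_sub_sub_cancel_left]
  · filter_upwards [eventually_turn_sub_turn hpe,
      (isCompact_range (D.arc e).continuous).isClosed.isOpen_compl.mem_nhds hpe] with q hq hqe
    simp only [N, if_neg hpe, if_neg (show q ∉ Set.range (D.arc e) from hqe)]
    rw [← Int.cast_sub, hq]

end Separation

section Faces

/-- The part of the plane seen from the interior of the edge `e`: a point lies in it if it can
be joined to the interior of `e` without meeting the rest of the drawing. -/
def region (e : E) : Set ℂ :=
  connectedComponentIn (D.carrier {e}ᶜ)ᶜ (D.arc e ⟨1 / 2, by norm_num, by norm_num⟩)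

theorem arc_mem_region {t : unitInterval} (h0 : t ≠ 0) (h1 : t ≠ 1) : D.arc e t ∈ D.region e := by
  have hconn : IsPreconnected (D.arc e '' Set.Ioo 0 1) :=
    isPreconnected_Ioo.image _ (D.arc e).continuous.continuousOn
  have ht : t ∈ Set.Ioo 0 1 :=
    ⟨unitInterval.pos_iff_ne_zero.2 h0, unitInterval.lt_one_iff_ne_one.2 h1⟩
  refine hconn.subset_connectedComponentIn (Set.mem_image_of_mem _ ⟨?_, ?_⟩) ?_
    (Set.mem_image_of_mem _ ht)
  · rw [← Subtype.coe_lt_coe]; norm_num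
  · rw [← Subtype.coe_lt_coe]; norm_num
  · rintro _ ⟨s, hs, rfl⟩ hmem
    exact (D.arc_mem_carrier_imp hmem).elim hs.1.ne' hs.2.ne

variable [Finite V] [Finite E]

theorem isOpen_compl_carrier (S : Set E) : IsOpen (D.carrier S)ᶜ :=
  (D.isCompact_carrier S).isClosed.isOpen_compl

theorem frontier_face_subset (hp : p ∉ D.carrier Set.univ) :
    frontier (connectedComponentIn (D.carrier Set.univ)ᶜ p) ⊆ D.carrier {e | p ∈ D.region e} := by
  intro x hx
  have hx_carrier : x ∈ D.carrier Set.univ := by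
    by_contra h
    exact Set.disjoint_left.1 (disjoint_frontier_connectedComponentIn
      (D.isOpen_compl_carrier _) p) hx h
  by_cases hpoint : x ∈ Set.range D.point
  · exact .inr hpoint
  obtain ⟨e, -, t, rfl⟩ := Set.mem_iUnion₂.1 (hx_carrier.resolve_right hpoint)
  refine .inl (D.arc_mem_arcs ?_ t)
  have hregion : D.arc e t ∈ D.region e := D.arc_mem_region
    (by rintro rfl; exact hpoint ⟨D.src e, (D.arc e).source.symm⟩)
    (by rintro rfl; exact hpoint ⟨D.tgt e, (D.arc e).target.symm⟩)
  have hsub := connectedComponentIn_subset_of_mem_closure (D.isOpen_compl_carrier {e}ᶜ)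
    (Set.compl_subset_compl.2 (D.carrier_mono (Set.subset_univ _)))
    (connectedComponentIn_subset _ _ hregion) (frontier_subset_closure hx)
  rw [← connectedComponentIn_eq hregion] at hsub
  exact hsub (mem_connectedComponentIn hp)

end Faces

/-- If the edges seen from `p` contained no cycle, the frontier of the face of `p` would carry a
logarithm of `(z - p) / (z - q)`, although it separates `p` from `q`. -/
theorem exists_not_hasLeaf_of_winding_ne [Finite V] [Fintype E] {z : E → ZMod 2}
    (hz : z ∈ D.cycles) (hp : p ∉ D.carrier Set.univ) (hq : q ∉ D.carrier Set.univ)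
    (hne : D.winding p z ≠ D.winding q z) :
    ∃ T ⊆ {e | p ∈ D.region e}, T.Nonempty ∧ ¬ D.HasLeaf T := by
  by_contra! hleaf
  have hcarrier (S : Set E) : D.carrier S ⊆ D.carrier Set.univ := D.carrier_mono (Set.subset_univ _)
  refine not_hasLogOn_of_frontier_subset (D.isCompact_carrier _) (D.frontier_face_subset hp)
    (mem_connectedComponentIn hp) (fun hmem => hne ?_) (fun h => hq (hcarrier _ h))
    (D.hasLogOn_carrier_of_hasLeaf hleaf (fun h => hp (hcarrier _ h)) fun h => hq (hcarrier _ h))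
  refine D.winding_eq_of_isPreconnected hz isPreconnected_connectedComponentIn ?_
    (mem_connectedComponentIn hp) hmem
  exact disjoint_compl_left.mono (connectedComponentIn_subset _ _)
    (Set.subset_union_left.trans (hcarrier _))

section Counting

variable [Fintype E]

/-- The winding parities of all cycles around `p`, as a functional on the cycle space. It depends
only on the face of the drawing that contains `p`. -/
noncomputable def cycleWinding (p : ℂ) : Module.Dual (ZMod 2) D.cycles :=
  (D.winding p).domRestrict D.cycles

instance : Finite (Module.Dual (ZMod 2) D.cycles) := Module.finite_of_finite (ZMod 2)

/-- The functionals `cycleWinding p` for `p` off the drawing. They stand for the faces of the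
drawing; distinct functionals come from distinct faces, which is all that the counting needs. -/
noncomputable def faces : Finset (Module.Dual (ZMod 2) D.cycles) :=
  (D.cycleWinding '' (D.carrier Set.univ)ᶜ).toFinite.toFinset

theorem mem_faces {x : Module.Dual (ZMod 2) D.cycles} :
    x ∈ D.faces ↔ ∃ p ∉ D.carrier Set.univ, D.cycleWinding p = x := by
  simp [faces]

theorem finrank_cycles_lt_card_faces [Finite V] :
    Module.finrank (ZMod 2) D.cycles < D.faces.card := by
  let evalAdd : D.cycles × ZMod 2 →ₗ[ZMod 2] (D.faces → ZMod 2) :=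
    LinearMap.pi fun x => x.1.coprod LinearMap.id
  have hinj : Function.Injective evalAdd := by
    refine (injective_iff_map_eq_zero _).2 ?_
    rintro ⟨z, c⟩ hzc
    have hwinding : ∀ p ∉ D.carrier Set.univ, D.winding p z = -c := fun p hp =>
      eq_neg_of_add_eq_zero_left <| congrFun hzc ⟨D.cycleWinding p, D.mem_faces.2 ⟨p, hp, rfl⟩⟩
    have hz : z = 0 := Subtype.ext (D.eq_zero_of_forall_winding_eq z.2 hwinding)
    obtain ⟨p, hp⟩ : ∃ p, p ∉ D.carrier Set.univ :=
      (Set.ne_univ_iff_exists_notMem _).1 fun h =>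
        noncompact_univ ℂ (h ▸ D.isCompact_carrier Set.univ)
    have hc : c = 0 := by simpa [hz, eq_comm] using hwinding p hp
    rw [hz, hc, Prod.mk_zero_zero]
  have hrank := LinearMap.finrank_le_finrank_of_injective hinj
  rwa [Module.finrank_prod, Module.finrank_self, Module.finrank_fintype_fun_eq_card,
    Fintype.card_coe] at hrank

/-- The face `x` of the drawing is adjacent to the edge `e`. -/
def AdjacentFace (x : Module.Dual (ZMod 2) D.cycles) (e : E) : Prop :=
  ∃ p ∉ D.carrier Set.univ, p ∈ D.region e ∧ D.cycleWinding p = x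

theorem sub_mem_span_of_adjacentFace [Finite V] {x y : Module.Dual (ZMod 2) D.cycles}
    (hx : D.AdjacentFace x e) (hy : D.AdjacentFace y e) :
    x - y ∈ ZMod 2 ∙ (LinearMap.proj (R := ZMod 2) e).domRestrict D.cycles := by
  obtain ⟨p, -, hpe, rfl⟩ := hx
  obtain ⟨q, -, hqe, rfl⟩ := hy
  rw [← Set.range_const (ι := Unit)]
  refine mem_span_of_iInf_ker_le_ker fun z hz => ?_
  have hze : (z : E → ZMod 2) e = 0 := by simpa using hz
  refine sub_eq_zero.2 (D.winding_eq_of_isPreconnected z.2 isPreconnected_connectedComponentIn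
    (disjoint_compl_left.mono (connectedComponentIn_subset _ _) ?_) hpe hqe)
  refine (D.arcs_mono ?_).trans Set.subset_union_left
  rintro e' he' rfl
  exact he' hze

open Classical in
theorem card_filter_adjacentFace_le_two [Finite V] (e : E) :
    (D.faces.filter (D.AdjacentFace · e)).card ≤ 2 := by
  rcases (D.faces.filter (D.AdjacentFace · e)).eq_empty_or_nonempty with hempty | ⟨y, hy⟩
  · simp [hempty]
  let δ := (LinearMap.proj (R := ZMod 2) e).domRestrict D.cycles
  have hsub : D.faces.filter (D.AdjacentFace · e) ⊆
      Finset.univ.image fun c : ZMod 2 => y + c • δ := by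
    intro x hx
    obtain ⟨c, hc⟩ := Submodule.mem_span_singleton.1 <|
      D.sub_mem_span_of_adjacentFace (Finset.mem_filter.1 hx).2 (Finset.mem_filter.1 hy).2
    exact Finset.mem_image.2 ⟨c, Finset.mem_univ _, by rw [hc, add_sub_cancel]⟩
  exact (Finset.card_le_card hsub).trans Finset.card_image_le

open Classical in
theorem le_card_filter_adjacentFace [Finite V] {g : ℕ}
    (hleaf : ∀ T : Set E, T.Nonempty → T.ncard < g → D.HasLeaf T) (htwo : 1 < D.faces.card)
    {x : Module.Dual (ZMod 2) D.cycles} (hx : x ∈ D.faces) :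
    g ≤ (Finset.univ.filter (D.AdjacentFace x)).card := by
  obtain ⟨y, hy, hne⟩ := Finset.exists_mem_ne htwo x
  obtain ⟨p, hp, rfl⟩ := D.mem_faces.1 hx
  obtain ⟨q, hq, rfl⟩ := D.mem_faces.1 hy
  obtain ⟨z, hz⟩ : ∃ z, D.cycleWinding p z ≠ D.cycleWinding q z := by
    by_contra! h
    exact hne (LinearMap.ext h).symm
  obtain ⟨T, hT, hTne, hTleaf⟩ := D.exists_not_hasLeaf_of_winding_ne z.2 hp hq hz
  have hg : g ≤ T.ncard := not_lt.1 fun h => hTleaf (hleaf T hTne h)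
  rw [← Set.ncard_coe_finset]
  refine hg.trans (Set.ncard_le_ncard fun e he => ?_)
  simpa using ⟨p, hp, hT he, rfl⟩

theorem mul_card_edges_add_two_le [Fintype V] [Nonempty V] {g : ℕ}
    (hleaf : ∀ T : Set E, T.Nonempty → T.ncard < g → D.HasLeaf T)
    (hVE : Fintype.card V ≤ Fintype.card E) :
    g * (Fintype.card E + 2) ≤ 2 * Fintype.card E + g * Fintype.card V := by
  classical
  have hrank := D.card_edges_lt_finrank_cycles_add
  have hfaces := D.finrank_cycles_lt_card_faces
  have hcount := Finset.sum_card_bipartiteAbove_eq_sum_card_bipartiteBelow (s := D.faces)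
    (t := (Finset.univ : Finset E)) D.AdjacentFace
  have habove : D.faces.card * g ≤
      ∑ x ∈ D.faces, (Finset.univ.bipartiteAbove D.AdjacentFace x).card :=
    Finset.card_nsmul_le_sum _ _ _ fun x hx => D.le_card_filter_adjacentFace hleaf (by lia) hx
  have hbelow : ∑ e, (D.faces.bipartiteBelow D.AdjacentFace e).card ≤ Fintype.card E * 2 :=
    Finset.sum_le_card_nsmul _ _ _ fun e _ => D.card_filter_adjacentFace_le_two e
  have heuler : Fintype.card E + 2 ≤ D.faces.card + Fintype.card V := by lia
  calc g * (Fintype.card E + 2) ≤ g * (D.faces.card + Fintype.card V) := by gcongr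
    _ ≤ 2 * Fintype.card E + g * Fintype.card V := by lia

end Counting

end Drawing

section Planar

variable {V : Type*} {G H : SimpleGraph V}

theorem exists_existsUnique_adj_of_isAcyclic [Finite G.edgeSet] (hG : G.IsAcyclic) (hne : G ≠ ⊥) :
    ∃ v, ∃! w, G.Adj v w := by
  obtain ⟨a, b, hab⟩ := ne_bot_iff_exists_adj.1 hne
  have : Nonempty V := ⟨a⟩
  obtain ⟨u, v, p, hp, hmax⟩ := Walk.exists_isPath_forall_isPath_length_le_length G
  have hnil : ¬p.Nil := fun h => by
    simpa [Walk.length_eq_zero_iff.2 h] using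
      hmax a b hab.toWalk (Walk.IsPath.of_adj hab)
  refine ⟨u, p.snd, p.adj_snd hnil, fun w hadj => hG.eq_snd_of_adj_start hp hadj ?_⟩
  have hlong : ¬(p.cons hadj.symm).IsPath := by grind [Walk.length_cons]
  grind [hp.cons]

theorem isAcyclic_of_encard_edgeSet_lt_egirth (hle : H ≤ G) (h : H.edgeSet.encard < G.egirth) :
    H.IsAcyclic := by
  classical
  intro a w hw
  refine h.not_ge ((egirth_anti hle).trans ((egirth_le_length hw).trans ?_))
  rw [← w.length_edges, ← List.toFinset_card_of_nodup hw.edges_nodup,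
    ← Set.encard_coe_eq_coe_finsetCard]
  exact Set.encard_le_encard fun e he => w.edges_subset_edgeSet (by simpa using he)

theorem four_le_egirth_of_coloring (c : G.Coloring Bool) : 4 ≤ G.egirth := by
  refine le_egirth.2 fun a w hw => ?_
  have heven : Even w.length := (c.even_length_iff_congr w).2 Iff.rfl
  have hthree := hw.three_le_length
  exact_mod_cast show 4 ≤ w.length by grind

theorem IsPlanar.exists_drawing (hG : IsPlanar G) :
    ∃ D : Drawing V G.edgeSet, ∀ e : G.edgeSet, (e : Sym2 V) = s(D.src e, D.tgt e) := by
  obtain ⟨f, γ, hf, hγ, hends, hinj, havoid, hcross⟩ := hG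
  choose u v huv h0 h1 using hends
  let φ := Complex.equivRealProdCLM.symm
  refine ⟨{ point := φ ∘ f
            src := u
            tgt := v
            arc := fun e =>
              { toFun := φ ∘ γ e
                continuous_toFun := φ.continuous.comp (hγ e)
                source' := congrArg φ (h0 e)
                target' := congrArg φ (h1 e) }
            point_injective := φ.injective.comp hf
            arc_injective := fun e => φ.injective.comp (hinj e)
            eq_zero_or_one_of_mem_range_point := ?_
            inter_subset_range_point := ?_ }, huv⟩
  · rintro e t ⟨w, hw⟩
    by_contra! h
    exact havoid e t (fun ht => h.1 (Subtype.ext ht)) (fun ht => h.2 (Subtype.ext ht)) w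
      (φ.injective hw.symm)
  · rintro e e' hne _ ⟨⟨s, rfl⟩, t, ht⟩
    obtain ⟨w, hw⟩ := hcross e e' hne s t (φ.injective ht.symm)
    exact ⟨w, congrArg φ hw⟩

theorem Drawing.hasLeaf_of_encard_lt_egirth (D : Drawing V G.edgeSet)
    (hD : ∀ e : G.edgeSet, (e : Sym2 V) = s(D.src e, D.tgt e)) {T : Set G.edgeSet} (hT : T.Nonempty)
    (hlt : T.encard < G.egirth) : D.HasLeaf T := by
  let F := fromEdgeSet (Subtype.val '' T)
  have hedge : F.edgeSet = Subtype.val '' T := by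
    rw [edgeSet_fromEdgeSet, sdiff_eq_left, Set.disjoint_left]
    rintro _ ⟨e, -, rfl⟩
    exact G.not_isDiag_of_mem_edgeSet e.2
  have hfin : Finite F.edgeSet := by
    rw [hedge]
    exact (Set.encard_lt_top_iff.1 (hlt.trans_le le_top)).image _
  have hle : F ≤ G := edgeSet_subset_edgeSet.1 (by rw [hedge]; exact Subtype.coe_image_subset _ T)
  have hacyclic : F.IsAcyclic := isAcyclic_of_encard_edgeSet_lt_egirth hle <| by
    rwa [hedge, Subtype.val_injective.encard_image]
  have hne : F ≠ ⊥ := by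
    rw [← edgeSet_nonempty, hedge]
    exact hT.image _
  obtain ⟨v, w, hvw, huniq⟩ := exists_existsUnique_adj_of_isAcyclic hacyclic hne
  have hadj : ∀ e ∈ T, ∀ x, (e : Sym2 V) = s(v, x) → x = w := fun e he x hx => by
    refine huniq x (F.mem_edgeSet.1 ?_)
    rw [hedge, ← hx]
    exact Set.mem_image_of_mem _ he
  have hinc : ∀ e, D.Incident v e ↔ ∃ x, (e : Sym2 V) = s(v, x) := fun e => by
    unfold Drawing.Incident
    rw [hD, ← Sym2.mem_iff, Sym2.mem_iff_exists]
  obtain ⟨e, heT, he⟩ := hedge ▸ F.mem_edgeSet.2 hvw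
  refine ⟨v, e, ⟨heT, (hinc e).2 ⟨w, he⟩⟩, fun e' ⟨heT', hinc'⟩ => Subtype.ext ?_⟩
  obtain ⟨x, hx⟩ := (hinc e').1 hinc'
  rw [hx, he, hadj e' heT' x hx]

theorem IsPlanar.mul_card_edgeSet_add_two_le [Finite V] [Nonempty V] (hG : IsPlanar G) {g : ℕ}
    (hg : g ≤ G.egirth) (hVE : Nat.card V ≤ Nat.card G.edgeSet) :
    g * (Nat.card G.edgeSet + 2) ≤ 2 * Nat.card G.edgeSet + g * Nat.card V := by
  cases nonempty_fintype V
  have : Fintype G.edgeSet := Fintype.ofFinite _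
  obtain ⟨D, hD⟩ := hG.exists_drawing
  simp only [Nat.card_eq_fintype_card] at hVE ⊢
  refine D.mul_card_edges_add_two_le (fun T hT hlt => ?_) hVE
  refine D.hasLeaf_of_encard_lt_egirth hD hT (lt_of_lt_of_le ?_ hg)
  rw [← T.toFinite.cast_ncard_eq]
  exact_mod_cast hlt

theorem IsPlanar.card_edgeSet_add_four_le [Finite V] (hG : IsPlanar G) (c : G.Coloring Bool)
    (hV : 3 ≤ Nat.card V) : Nat.card G.edgeSet + 4 ≤ 2 * Nat.card V := by
  have : Nonempty V := (Nat.card_pos_iff.1 (by lia)).1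
  by_cases hVE : Nat.card V ≤ Nat.card G.edgeSet
  · have := hG.mul_card_edgeSet_add_two_le (four_le_egirth_of_coloring c) hVE
    lia
  · lia

/-- `G` is the union of `k` planar subgraphs. -/
def IsUnionOfPlanar (G : SimpleGraph V) (k : ℕ) : Prop :=
  ∃ H : Fin k → SimpleGraph V, (∀ i, H i ≤ G) ∧ (∀ i, IsPlanar (H i)) ∧ ⨆ i, H i = G

theorem IsUnionOfPlanar.pos {k : ℕ} (hG : IsUnionOfPlanar G k) (hne : G ≠ ⊥) : 0 < k := by
  obtain ⟨H, -, -, hsup⟩ := hG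
  rcases k.eq_zero_or_pos with rfl | hk
  · exact absurd (by rw [← hsup, iSup_of_empty]) hne
  · exact hk

theorem IsUnionOfPlanar.card_edgeSet_add_le [Finite V] {k : ℕ} (hG : IsUnionOfPlanar G k)
    (c : G.Coloring Bool) (hV : 3 ≤ Nat.card V) :
    Nat.card G.edgeSet + 4 * k ≤ 2 * k * Nat.card V := by
  obtain ⟨H, hle, hplanar, hsup⟩ := hG
  have hbound : ∀ i, Nat.card (H i).edgeSet + 4 ≤ 2 * Nat.card V := fun i =>
    (hplanar i).card_edgeSet_add_four_le (c.comp (Hom.ofLE (hle i))) hV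
  calc Nat.card G.edgeSet + 4 * k
      ≤ ∑ i, Nat.card (H i).edgeSet + 4 * k := by
        gcongr
        simp_rw [← hsup, edgeSet_iSup, Nat.card_coe_set_eq]
        exact Set.ncard_iUnion_le_of_fintype _
    _ = ∑ i, (Nat.card (H i).edgeSet + 4) := by
        simp only [Finset.sum_add_distrib, Finset.sum_const, Finset.card_univ, Fintype.card_fin,
          smul_eq_mul, mul_comm]
    _ ≤ ∑ _ : Fin k, 2 * Nat.card V := Finset.sum_le_sum fun i _ => hbound i
    _ = 2 * k * Nat.card V := by
        simp only [Finset.sum_const, Finset.card_univ, Fintype.card_fin, smul_eq_mul]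
        ring

theorem isUnionOfPlanar_card {ι : Type*} [Finite ι] {H : ι → SimpleGraph V} (hle : ∀ i, H i ≤ G)
    (hplanar : ∀ i, IsPlanar (H i)) (hcover : G ≤ ⨆ i, H i) :
    IsUnionOfPlanar G (Nat.card ι) :=
  ⟨H ∘ (Finite.equivFin ι).symm, fun _ => hle _, fun _ => hplanar _,
    ((Finite.equivFin ι).symm.iSup_comp (g := H)).trans (le_antisymm (iSup_le hle) hcover)⟩

end Planar

section Book

variable {V V' α : Type*} {G U L : SimpleGraph V} {G' : SimpleGraph V'} [LinearOrder α]

theorem IsPlanar.of_injective_hom (hG' : IsPlanar G') (φ : G →g G') (hφ : Function.Injective φ) :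
    IsPlanar G := by
  obtain ⟨f, γ, hf, hγ, hends, hinj, havoid, hcross⟩ := hG'
  have hends' : ∀ e : G.edgeSet, ∃ u v, (e : Sym2 V) = s(u, v) ∧
      γ (φ.mapEdgeSet e) ⟨0, by norm_num⟩ = f (φ u) ∧
      γ (φ.mapEdgeSet e) ⟨1, by norm_num⟩ = f (φ v) := by
    rintro ⟨e, he⟩
    obtain ⟨u', v', huv, h0, h1⟩ := hends (φ.mapEdgeSet ⟨e, he⟩)
    induction e with | _ a b
    rcases Sym2.eq_iff.1 huv with ⟨rfl, rfl⟩ | ⟨rfl, rfl⟩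
    · exact ⟨a, b, rfl, h0, h1⟩
    · exact ⟨b, a, Sym2.eq_swap, h0, h1⟩
  refine ⟨f ∘ φ, γ ∘ φ.mapEdgeSet, hf.comp hφ, fun e => hγ _, hends', fun e => hinj _,
    fun e t h0 h1 v => havoid _ t h0 h1 (φ v), fun e e' hne s t hst => ?_⟩
  obtain ⟨w, hw⟩ := hcross _ _ ((Hom.mapEdgeSet.injective φ hφ).ne hne) s t hst
  obtain ⟨u, v, -, h0, h1⟩ := hends' e
  by_cases hs0 : (s : ℝ) = 0
  · exact ⟨u, by rw [Function.comp_apply, ← h0]; congr; exact hs0.symm⟩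
  · by_cases hs1 : (s : ℝ) = 1
    · exact ⟨v, by rw [Function.comp_apply, ← h1]; congr; exact hs1.symm⟩
    · exact absurd hw.symm (havoid _ s hs0 hs1 w)

theorem IsUnionOfPlanar.of_embedding {k : ℕ} (hG' : IsUnionOfPlanar G' k) (φ : G ↪g G') :
    IsUnionOfPlanar G k := by
  obtain ⟨H, hle, hplanar, hsup⟩ := hG'
  have hle' : ∀ i, (H i).comap φ ≤ G := fun i u v h => φ.map_adj_iff.1 (hle i h)
  refine ⟨fun i => (H i).comap φ, hle',
    fun i => (hplanar i).of_injective_hom ⟨φ, id⟩ φ.injective, (iSup_le hle').antisymm ?_⟩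
  intro u v h
  obtain ⟨i, hi⟩ := iSup_adj.1 (hsup ▸ φ.map_adj_iff.2 h : (⨆ i, H i).Adj (φ u) (φ v))
  exact iSup_adj.2 ⟨i, hi⟩

/-- The edges of `G`, drawn as arcs on one side of a line on which the vertices are placed by
`pos`, do not cross: `G` fits on one page of a book with this spine. -/
def NonCrossing (pos : V → α) (G : SimpleGraph V) : Prop :=
  ∀ ⦃a b c d⦄, G.Adj a b → G.Adj c d → pos a < pos c → pos c < pos b → ¬pos b < pos d

/-- The point with abscissa `x` on the parabola of leading coefficient `-c` that meets the
horizontal axis at `a` and `b`. -/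
def parabola (c a b x : ℝ) : ℝ × ℝ := (x, c * ((x - a) * (b - x)))

theorem lt_and_lt_or_eq_of_parabola_eq {a b a' b' x : ℝ} (hx : x ∈ Set.Ioo a b)
    (hx' : x ∈ Set.Ioo a' b') (h : (x - a) * (b - x) = (x - a') * (b' - x)) :
    a < a' ∧ b < b' ∨ a' < a ∧ b' < b ∨ a = a' ∧ b = b' := by
  obtain ⟨hax, hxb⟩ := hx
  obtain ⟨_, _⟩ := hx'
  rcases lt_trichotomy a a' with ha | rfl | ha
  · refine .inl ⟨ha, ?_⟩
    by_contra! hb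
    nlinarith
  · refine .inr (.inr ⟨rfl, ?_⟩)
    linarith [mul_left_cancel₀ (sub_pos.2 hax).ne' h]
  · refine .inr (.inl ⟨ha, ?_⟩)
    by_contra! hb
    nlinarith

theorem eq_and_lt_and_lt_or_eq_of_parabola_eq {c c' a b a' b' x : ℝ} (hc : c = 1 ∨ c = -1)
    (hc' : c' = 1 ∨ c' = -1) (hx : x ∈ Set.Ioo a b) (hx' : x ∈ Set.Icc a' b')
    (h : parabola c a b x = parabola c' a' b' x) :
    c = c' ∧ x ∈ Set.Ioo a' b' ∧ (a < a' ∧ b < b' ∨ a' < a ∧ b' < b ∨ a = a' ∧ b = b') := by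
  have hy : c * ((x - a) * (b - x)) = c' * ((x - a') * (b' - x)) := congrArg Prod.snd h
  have hpos : 0 < (x - a) * (b - x) := mul_pos (sub_pos.2 hx.1) (sub_pos.2 hx.2)
  have hnonneg : 0 ≤ (x - a') * (b' - x) := mul_nonneg (sub_nonneg.2 hx'.1) (sub_nonneg.2 hx'.2)
  have hcc : c = c' := by rcases hc with rfl | rfl <;> rcases hc' with rfl | rfl <;> linarith
  have heq : (x - a) * (b - x) = (x - a') * (b' - x) := by
    rcases hc with rfl | rfl <;> subst hcc <;> linarith
  have hx'' : x ∈ Set.Ioo a' b' := by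
    refine ⟨hx'.1.lt_of_ne ?_, hx'.2.lt_of_ne ?_⟩ <;> rintro rfl <;> grind
  exact ⟨hcc, hx'', lt_and_lt_or_eq_of_parabola_eq hx hx'' heq⟩

theorem isPlanar_of_parabolas {pos : V → ℝ} (hpos : Function.Injective pos)
    {u v : G.edgeSet → V} (huv : ∀ e : G.edgeSet, (e : Sym2 V) = s(u e, v e))
    (hlt : ∀ e, pos (u e) < pos (v e)) {c : G.edgeSet → ℝ} (hc : ∀ e, c e = 1 ∨ c e = -1)
    (hcross : ∀ e e', c e = c e' →
      pos (u e) < pos (u e') → pos (u e') < pos (v e) → ¬pos (v e) < pos (v e')) :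
    IsPlanar G := by
  let x (e : G.edgeSet) (t : Set.Icc (0 : ℝ) 1) : ℝ :=
    AffineMap.lineMap (pos (u e)) (pos (v e)) (t : ℝ)
  have hx : ∀ e t, x e t ∈ Set.Icc (pos (u e)) (pos (v e)) := fun e t => by
    rw [← segment_eq_Icc (hlt e).le, segment_eq_image_lineMap]
    exact Set.mem_image_of_mem _ t.2
  refine ⟨fun w => (pos w, 0), fun e t => parabola (c e) (pos (u e)) (pos (v e)) (x e t),
    fun _ _ h => hpos (congrArg Prod.fst h), fun e => ?_, fun e => ⟨u e, v e, huv e, ?_, ?_⟩,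
    fun e s t h => ?_, fun e t h0 h1 w h => ?_, fun e e' hne s t h => ?_⟩
  · simp only [parabola, x, AffineMap.lineMap_apply_module]
    fun_prop
  · simp [parabola, x]
  · simp [parabola, x]
  · exact Subtype.ext (AffineMap.lineMap_injective ℝ (hlt e).ne (congrArg Prod.fst h))
  · have hc0 : c e ≠ 0 := by rcases hc e with h | h <;> simp [h]
    have hzero : (x e t - pos (u e)) * (pos (v e) - x e t) = 0 :=
      (mul_eq_zero.1 (congrArg Prod.snd h)).resolve_left hc0
    rcases mul_eq_zero.1 hzero with hxu | hxv
    · exact h0 ((AffineMap.lineMap_eq_left_iff.1 (sub_eq_zero.1 hxu)).resolve_left (hlt e).ne)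
    · exact h1 ((AffineMap.lineMap_eq_right_iff.1 (sub_eq_zero.1 hxv).symm).resolve_left (hlt e).ne)
  · rcases (hx e s).1.eq_or_lt with hxu | hxu
    · exact ⟨u e, by simp [parabola, ← hxu]⟩
    rcases (hx e s).2.eq_or_lt with hxv | hxv
    · exact ⟨v e, by simp [parabola, hxv]⟩
    have hxx : x e s = x e' t := congrArg Prod.fst h
    obtain ⟨hcc, hIoo, hends⟩ := eq_and_lt_and_lt_or_eq_of_parabola_eq (hc e) (hc e') ⟨hxu, hxv⟩
      (hxx ▸ hx e' t) (h.trans (by rw [hxx]))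
    rcases hends with ⟨hu, hv⟩ | ⟨hu, hv⟩ | ⟨hu, hv⟩
    · exact absurd hv (hcross e e' hcc hu (hIoo.1.trans hxv))
    · exact absurd hv (hcross e' e hcc.symm hu (hxu.trans hIoo.2))
    · exact absurd (Subtype.ext (by rw [huv, huv, hpos hu, hpos hv])) hne

theorem isPlanar_sup_of_nonCrossing [Countable α] {pos : V → α} (hpos : Function.Injective pos)
    (hU : NonCrossing pos U) (hL : NonCrossing pos L) : IsPlanar (U ⊔ L) := by
  classical
  obtain ⟨ι⟩ := Order.embedding_from_countable_to_dense α ℝ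
  have hends : ∀ e : (U ⊔ L).edgeSet, ∃ u v, (e : Sym2 V) = s(u, v) ∧ pos u < pos v := by
    rintro ⟨e, he⟩
    induction e with | _ u v
    rcases (hpos.ne (Adj.ne (mem_edgeSet _ |>.1 he))).lt_or_gt with h | h
    · exact ⟨u, v, rfl, h⟩
    · exact ⟨v, u, Sym2.eq_swap, h⟩
  choose u v huv hlt using hends
  refine isPlanar_of_parabolas (pos := ι ∘ pos) (c := fun e => if U.Adj (u e) (v e) then 1 else -1)
    (ι.injective.comp hpos) huv (fun e => ι.lt_iff_lt.2 (hlt e)) (fun e => ite_eq_or_eq _ _ _) ?_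
  simp only [Function.comp_apply, ι.lt_iff_lt]
  intro e e' hpage
  have hadj : ∀ e, U.Adj (u e) (v e) ∨ L.Adj (u e) (v e) := fun e => by
    rw [← sup_adj, ← mem_edgeSet, ← huv]
    exact e.2
  by_cases he : U.Adj (u e) (v e) <;> by_cases he' : U.Adj (u e') (v e')
  · exact hU he he'
  · norm_num [he, he'] at hpage
  · norm_num [he, he'] at hpage
  · exact hL ((hadj e).resolve_left he) ((hadj e').resolve_left he')

end Book

section Slots

variable {V : Type*} [Encodable V]

/-- The graph on `V` whose vertices are grouped into slots: all vertices of slot `i` are joined to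
all vertices of slot `j` for `(i, j) ∈ arcs`, and within a slot those with consecutive codes are
joined. -/
def slotGraph (arcs : List (ℕ × ℕ)) (slot : V → ℕ) : SimpleGraph V :=
  fromRel fun u v => (slot u, slot v) ∈ arcs ∨
    slot u = slot v ∧ Encodable.encode u + 1 = Encodable.encode v

/-- Arcs between slots placed along a line can be drawn on one side of it without crossings, even
if every slot for which `single` fails is blown up to many vertices. -/
def NonCrossingArcs (single : ℕ → Bool) (arcs : List (ℕ × ℕ)) : Prop :=
  ∀ x ∈ arcs, x.1 < x.2 ∧ ∀ y ∈ arcs, x.1 ≤ y.1 → y.1 ≤ x.2 → x.2 ≤ y.2 →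
    x.1 = y.1 ∧ single x.1 ∨ y.1 = x.2 ∧ single y.1 ∨ x.2 = y.2 ∧ single x.2

instance (single : ℕ → Bool) (arcs : List (ℕ × ℕ)) : Decidable (NonCrossingArcs single arcs) :=
  inferInstanceAs (Decidable (∀ x ∈ arcs, _))

/-- The vertices ordered by slot, and by code within a slot. -/
def slotPos (slot : V → ℕ) (v : V) : ℕ ×ₗ ℕ := toLex (slot v, Encodable.encode v)

theorem slotPos_injective (slot : V → ℕ) : Function.Injective (slotPos slot) := fun _ _ h =>
  Encodable.encode_injective (congrArg (fun p => (ofLex p).2) h)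

theorem nonCrossing_slotGraph {single : ℕ → Bool} {arcs : List (ℕ × ℕ)} {slot : V → ℕ}
    (harcs : NonCrossingArcs single arcs)
    (hslot : ∀ u v, single (slot u) → slot u = slot v → u = v) :
    NonCrossing (slotPos slot) (slotGraph arcs slot) := by
  intro a b c d hab hcd hac hcb hbd
  simp only [slotPos, Prod.Lex.toLex_lt_toLex] at hac hcb hbd
  simp only [slotGraph, fromRel_adj] at hab hcd
  -- No vertex lies between consecutive codes in a slot, so both edges come from arcs; these share
  -- an end whose slot is single, so two of the four vertices coincide.
  have := hslot a c
  have := hslot c b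
  have := hslot b d
  unfold NonCrossingArcs at harcs
  grind

theorem isPlanar_slotGraph_sup {single : ℕ → Bool} {upper lower : List (ℕ × ℕ)} {slot : V → ℕ}
    (hupper : NonCrossingArcs single upper) (hlower : NonCrossingArcs single lower)
    (hslot : ∀ u v, single (slot u) → slot u = slot v → u = v) :
    IsPlanar (slotGraph upper slot ⊔ slotGraph lower slot) := by
  have : Countable (ℕ ×ₗ ℕ) := inferInstanceAs (Countable (ℕ × ℕ))
  exact isPlanar_sup_of_nonCrossing (slotPos_injective slot)
    (nonCrossing_slotGraph hupper hslot) (nonCrossing_slotGraph hlower hslot)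

end Slots

section Layers

variable {m : ℕ}

/-- Half of the vertices of `K_{4m+2,4m+2}`: `m` blocks of size four and two further vertices. -/
abbrev Side (m : ℕ) : Type := (Fin m × Fin 4) ⊕ Fin 2

/-- The slots of the layer in which block `r` of both sides induces a cube, that is `K_{4,4}` minus
a perfect matching. Every other vertex lies in a side face of the cube and is joined to two of its
corners. -/
def cubeSlot (r : Fin m) : Side m ⊕ Side m → ℕ
  | .inl (.inl (i, j)) => if i = r then ![5, 9, 11, 3] j else ![4, 4, 10, 10] j
  | .inl (.inr j) => ![4, 10] j
  | .inr (.inl (i, j)) => if i = r then ![0, 2, 6, 8] j else ![7, 1, 1, 7] j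
  | .inr (.inr j) => ![1, 7] j

/-- The pairs of slots joined above the line in a cube layer. -/
def cubeUpperArcs : List (ℕ × ℕ) :=
  [(0, 3), (3, 6), (6, 9), (0, 9), (2, 3), (5, 6), (8, 9), (0, 11), (1, 3), (4, 6), (7, 9), (0, 10)]

/-- The pairs of slots joined below the line in a cube layer. -/
def cubeLowerArcs : List (ℕ × ℕ) :=
  [(2, 5), (5, 8), (8, 11), (2, 11), (1, 11), (2, 4), (5, 7), (8, 10)]

/-- The slots of the layer that contains the matchings missing from the cubes and all edges at the
extra vertices that the cube layers leave out. -/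
def hubSlot : Side m ⊕ Side m → ℕ
  | .inl (.inl (_, j)) => 2 * j + 1
  | .inl (.inr j) => 4 * j
  | .inr (.inl (_, j)) => 2 * j + 1
  | .inr (.inr j) => 4 * j + 2

/-- The pairs of slots joined above the line in the hub layer. -/
def hubUpperArcs : List (ℕ × ℕ) :=
  [(1, 2), (2, 3), (5, 6), (6, 7), (0, 2), (2, 4), (4, 6), (0, 6)]

/-- The pairs of slots joined below the line in the hub layer. -/
def hubLowerArcs : List (ℕ × ℕ) := [(0, 1), (0, 7), (3, 4), (4, 5)]

/-- The planar layer that covers the edges inside block `r` outside a perfect matching, and half of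
the edges to block `r` from each vertex outside it. -/
def cubeLayer (r : Fin m) : SimpleGraph (Side m ⊕ Side m) :=
  slotGraph cubeUpperArcs (cubeSlot r) ⊔ slotGraph cubeLowerArcs (cubeSlot r)

/-- The planar layer that covers what the cube layers leave out. -/
def hubLayer (m : ℕ) : SimpleGraph (Side m ⊕ Side m) :=
  slotGraph hubUpperArcs hubSlot ⊔ slotGraph hubLowerArcs hubSlot

theorem isPlanar_cubeLayer (r : Fin m) : IsPlanar (cubeLayer r) := by
  refine isPlanar_slotGraph_sup (single := fun i => i % 3 ≠ 1) (by decide) (by decide) ?_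
  rintro ((⟨i, j⟩ | j) | (⟨i, j⟩ | j)) ((⟨i', j'⟩ | j') | (⟨i', j'⟩ | j')) <;>
    fin_cases j <;> fin_cases j' <;> simp [cubeSlot] <;> grind

theorem isPlanar_hubLayer : IsPlanar (hubLayer m) := by
  refine isPlanar_slotGraph_sup (single := fun i => i % 2 = 0) (by decide) (by decide) ?_
  rintro ((⟨i, j⟩ | j) | (⟨i, j⟩ | j)) ((⟨i', j'⟩ | j') | (⟨i', j'⟩ | j')) <;>
    simp only [hubSlot] <;> grind

theorem cubeLayer_adj_of_mem {r : Fin m} {w w' : Side m}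
    (h : (cubeSlot r (.inl w), cubeSlot r (.inr w')) ∈ cubeUpperArcs ++ cubeLowerArcs ∨
      (cubeSlot r (.inr w'), cubeSlot r (.inl w)) ∈ cubeUpperArcs ++ cubeLowerArcs) :
    (cubeLayer r).Adj (.inl w) (.inr w') := by
  simp only [cubeLayer, slotGraph, sup_adj, fromRel_adj]
  grind

theorem cubeLayer_adj_of_ne (i : Fin m) {j j' : Fin 4} (hj : j ≠ j') :
    (cubeLayer i).Adj (.inl (.inl (i, j))) (.inr (.inl (i, j'))) := by
  apply cubeLayer_adj_of_mem
  simp only [cubeSlot, if_true]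
  decide +revert

theorem cubeLayer_adj_or_cubeLayer_adj {i i' : Fin m} (hi : i ≠ i') (j j' : Fin 4) :
    (cubeLayer i).Adj (.inl (.inl (i, j))) (.inr (.inl (i', j'))) ∨
      (cubeLayer i').Adj (.inl (.inl (i, j))) (.inr (.inl (i', j'))) := by
  refine Or.imp cubeLayer_adj_of_mem cubeLayer_adj_of_mem ?_
  simp only [cubeSlot, if_true, hi, hi.symm, if_false]
  clear hi
  decide +revert

theorem hubLayer_adj_of_mem {w w' : Side m}
    (h : (hubSlot (.inl w), hubSlot (.inr w')) ∈ hubUpperArcs ++ hubLowerArcs ∨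
      (hubSlot (.inr w'), hubSlot (.inl w)) ∈ hubUpperArcs ++ hubLowerArcs) :
    (hubLayer m).Adj (.inl w) (.inr w') := by
  simp only [hubLayer, slotGraph, sup_adj, fromRel_adj]
  grind

theorem hubLayer_adj_matching (p : Fin m × Fin 4) :
    (hubLayer m).Adj (.inl (.inl p)) (.inr (.inl p)) := by
  simp [hubLayer, slotGraph, hubSlot]

theorem adj_cubeLayer_or_adj_hubLayer (w w' : Side m) :
    (∃ r, (cubeLayer r).Adj (.inl w) (.inr w')) ∨ (hubLayer m).Adj (.inl w) (.inr w') := by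
  rcases w with ⟨i, j⟩ | j <;> rcases w' with ⟨i', j'⟩ | j'
  · rcases eq_or_ne i i' with rfl | hi
    · rcases eq_or_ne j j' with rfl | hj
      · exact .inr (hubLayer_adj_matching _)
      · exact .inl ⟨i, cubeLayer_adj_of_ne i hj⟩
    · exact .inl ((cubeLayer_adj_or_cubeLayer_adj hi j j').elim (⟨i, ·⟩) (⟨i', ·⟩))
  · refine Or.imp (fun h => ⟨i, cubeLayer_adj_of_mem h⟩) hubLayer_adj_of_mem ?_
    simp only [cubeSlot, hubSlot, if_true]
    decide +revert
  · refine Or.imp (fun h => ⟨i', cubeLayer_adj_of_mem h⟩) hubLayer_adj_of_mem ?_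
    simp only [cubeSlot, hubSlot, if_true]
    decide +revert
  · refine .inr (hubLayer_adj_of_mem ?_)
    simp only [hubSlot]
    decide +revert

theorem isUnionOfPlanar_completeBipartiteGraph_side (m : ℕ) :
    IsUnionOfPlanar (completeBipartiteGraph (Side m) (Side m)) (m + 1) := by
  let layer (o : Option (Fin m)) : SimpleGraph (Side m ⊕ Side m) := o.elim (hubLayer m) cubeLayer
  have hplanar : ∀ o, IsPlanar (layer o)
    | none => isPlanar_hubLayer
    | some r => isPlanar_cubeLayer r
  have hcover : ∀ w w', ∃ o, (layer o).Adj (.inl w) (.inr w') := fun w w' =>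
    (adj_cubeLayer_or_adj_hubLayer w w').elim (fun ⟨r, h⟩ => ⟨some r, h⟩) (fun h => ⟨none, h⟩)
  have hcard : Nat.card (Option (Fin m)) = m + 1 := by simp
  rw [← hcard]
  refine isUnionOfPlanar_card (H := fun o => layer o ⊓ completeBipartiteGraph _ _)
    (fun _ => inf_le_right)
    (fun o => (hplanar o).of_injective_hom (Hom.ofLE inf_le_left) Function.injective_id) ?_
  rintro (w | w) (w' | w') h
  · simp at h
  · simpa using hcover w w'
  · simpa [adj_comm] using hcover w' w
  · simp at h

theorem isUnionOfPlanar_completeBipartiteGraph_of_le {n m : ℕ} (hn : n ≤ 4 * m + 2) :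
    IsUnionOfPlanar (completeBipartiteGraph (Fin n) (Fin n)) (m + 1) := by
  obtain ⟨f⟩ : Nonempty (Fin n ↪ Side m) :=
    Function.Embedding.nonempty_of_card_le (by simp; omega)
  refine (isUnionOfPlanar_completeBipartiteGraph_side m).of_embedding ⟨f.sumMap f, ?_⟩
  rintro (a | a) (b | b) <;> simp

end Layers

section CompleteBipartite

theorem card_edgeSet_completeBipartiteGraph (V W : Type*) :
    Nat.card (completeBipartiteGraph V W).edgeSet = Nat.card V * Nat.card W := by
  rw [Nat.card_coe_set_eq, Set.ncard, encard_edgeSet_completeBipartiteGraph, ENat.toNat_mul,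
    Nat.card, Nat.card]
  rfl

theorem IsUnionOfPlanar.add_two_le_four_mul {n k : ℕ} (hn : 1 ≤ n)
    (h : IsUnionOfPlanar (completeBipartiteGraph (Fin n) (Fin n)) k) : n + 2 ≤ 4 * k := by
  have hedges : Nat.card (completeBipartiteGraph (Fin n) (Fin n)).edgeSet = n * n := by
    rw [card_edgeSet_completeBipartiteGraph, Nat.card_fin]
  rcases hn.eq_or_lt with rfl | hn
  · have : 0 < k := h.pos fun hbot => by simp [hbot] at hedges
    omega
  · have := h.card_edgeSet_add_le (CompleteBipartiteGraph.bicoloring _ _) (by simp; omega)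
    simp only [hedges, Nat.card_sum, Nat.card_fin] at this
    nlinarith

theorem thickness_completeBipartiteGraph_eq {n m : ℕ} (hn : 1 ≤ n) (hle : n ≤ 4 * m + 2)
    (hge : 4 * m ≤ n + 1) : thickness (completeBipartiteGraph (Fin n) (Fin n)) = m + 1 := by
  have hunion := isUnionOfPlanar_completeBipartiteGraph_of_le hle
  refine le_antisymm (Nat.sInf_le hunion) (le_csInf ⟨_, hunion⟩ fun k hk => ?_)
  have := IsUnionOfPlanar.add_two_le_four_mul hn hk
  omega

end CompleteBipartite

theorem thickness_completeBipartite (n : ℕ) (hn : 1 ≤ n) :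
    (thickness (completeBipartiteGraph (Fin n) (Fin n)) : ℤ) = ⌈((n : ℚ) + 2) / 4⌉ := by
  obtain ⟨m, hle, hge⟩ : ∃ m, n ≤ 4 * m + 2 ∧ 4 * m ≤ n + 1 := ⟨(n + 1) / 4, by omega, by omega⟩
  rw [thickness_completeBipartiteGraph_eq hn hle hge, eq_comm, Int.ceil_eq_iff]
  have hle' : (n : ℚ) ≤ 4 * m + 2 := by exact_mod_cast hle
  have hge' : (4 : ℚ) * m ≤ n + 1 := by exact_mod_cast hge
  push_cast
  constructor <;> linarith
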